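/- If a is a ribbon with n nodes all of which are negative, then γ(a) = n/2 + 1: every extension of a has at least n/2 + 1 critical points in the open unit disk, and some extension of a has exactly n/2 + 1 critical points. -/

import Mathlib

open scoped RealInnerProductSpace

noncomputable section

abbrev E2 : Type := EuclideanSpace ℝ (Fin 2)

/-- The point (cos t, sin t) on the unit circle in ℝ². -/
def sphPt (t : ℝ) : E2 := (EuclideanSpace.equiv (Fin 2) ℝ).symm ![Real.cos t, Real.sin t]

/-- A ribbon with `n` nodes, encoded via the angle parametrization `g = φ ∘ (cos, sin)`
of a C^∞ function `φ : S¹ → ℝ` whose critical points on the circle are exactly the `n`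
nondegenerate local extrema (nodes) at angles `θ 0 < θ 1 < ⋯ < θ (n-1)` in `[0, 2π)`,
with pairwise distinct critical values, together with a marking `ν` of the nodes by `±1`. -/
structure Ribbon (n : ℕ) : Type where
  g : ℝ → ℝ
  θ : Fin n → ℝ
  ν : Fin n → ℤ
  n_even : Even n
  n_pos : 0 < n
  smooth_g : ContDiff ℝ (⊤ : ℕ∞) g
  periodic_g : Function.Periodic g (2 * Real.pi)
  theta_mem : ∀ i, θ i ∈ Set.Ico (0 : ℝ) (2 * Real.pi)
  theta_mono : StrictMono θ
  node_crit : ∀ i, deriv g (θ i) = 0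
  node_nondeg : ∀ i, deriv (deriv g) (θ i) ≠ 0
  crit_only : ∀ t ∈ Set.Ico (0 : ℝ) (2 * Real.pi), deriv g t = 0 → ∃ i, t = θ i
  values_distinct : ∀ i j, g (θ i) = g (θ j) → i = j
  nu_sign : ∀ i, ν i = 1 ∨ ν i = -1

/-- The signature σ = s₊ − s₋ of a ribbon. -/
def Ribbon.sigma {n : ℕ} (a : Ribbon n) : ℤ := ∑ i, a.ν i

/-- Critical points of `f` in the open unit disk. -/
def critPts (f : E2 → ℝ) : Set E2 :=
  {x | x ∈ Metric.ball (0 : E2) 1 ∧ fderiv ℝ f x = 0}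

/-- `f : ℝ² → ℝ` is an extension of the ribbon `a`: it is C^∞, agrees with `φ` on the unit
circle, has nowhere-vanishing gradient on the circle, and at each node the radial derivative
`⟪∇f(p), p⟫` has sign `ν p` if `p` is a local maximum of `φ` (second derivative of `g`
negative there) and sign `−ν p` if `p` is a local minimum of `φ`. -/
def IsExtension {n : ℕ} (a : Ribbon n) (f : E2 → ℝ) : Prop :=
  ContDiff ℝ (⊤ : ℕ∞) f ∧
  (∀ t : ℝ, f (sphPt t) = a.g t) ∧
  (∀ x ∈ Metric.sphere (0 : E2) 1, fderiv ℝ f x ≠ 0) ∧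
  (∀ i : Fin n,
    (deriv (deriv a.g) (a.θ i) < 0 →
      0 < (a.ν i : ℝ) * ⟪gradient f (sphPt (a.θ i)), sphPt (a.θ i)⟫) ∧
    (0 < deriv (deriv a.g) (a.θ i) →
      (a.ν i : ℝ) * ⟪gradient f (sphPt (a.θ i)), sphPt (a.θ i)⟫ < 0))

/-- The ribbon invariant γ: the infimum, over all extensions `f` of `a`, of the number of
critical points of `f` in the open unit disk (a value in `ℕ∞`). -/
def gammaR {n : ℕ} (a : Ribbon n) : ℕ∞ :=
  sInf {k : ℕ∞ | ∃ f : E2 → ℝ, IsExtension a f ∧ (critPts f).encard = k}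

open Complex in
lemma side_aux (u : ℝ → ℝ) (hu : Continuous u) (hc : ∀ t, 0 < Real.cos (u t)) (a0 a1 : ℝ) (k0 k1 : ℤ)
    (h0 : u 0 = a0 + k0 * (2 * Real.pi)) (h1 : u 1 = a1 + k1 * (2 * Real.pi))
    (ha0 : |a0| < Real.pi / 2) (ha1 : |a1| < Real.pi / 2) : u 1 - u 0 = a1 - a0 := by
  have hpi := Real.pi_pos
  rw [abs_lt] at ha0 ha1
  have key : ∀ k : ℤ, ¬ (Real.pi + k * (2 * Real.pi) ∈ Set.uIcc (u 0) (u 1)) := by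
    intro k hk
    obtain ⟨t, -, ht⟩ := intermediate_value_uIcc (f := u) (a := 0) (b := 1) hu.continuousOn hk
    have := hc t
    rw [ht, Real.cos_add_int_mul_two_pi, Real.cos_pi] at this
    linarith
  have : k0 = k1 := by
    rcases lt_trichotomy k0 k1 with h | h | h
    · exfalso
      apply key k0
      have : (k0 : ℝ) + 1 ≤ k1 := by exact_mod_cast h
      apply Set.Icc_subset_uIcc
      constructor <;> nlinarith
    · exact h
    · exfalso
      apply key k1
      have : (k1 : ℝ) + 1 ≤ k0 := by exact_mod_cast h
      apply Set.Icc_subset_uIcc'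
      constructor <;> nlinarith
  rw [h0, h1, this]; ring

lemma corner_aux (L : ℂ) (a x : ℝ) (hx0 : 0 < x) (hx1 : x < 2 * Real.pi)
    (h : Complex.exp L = Complex.exp (a * Complex.I) - Complex.exp ((a + x : ℝ) * Complex.I)) :
    ∃ k : ℤ, L.im - a = (x - Real.pi) / 2 + k * (2 * Real.pi) := by
  have hs : 0 < Real.sin (x / 2) := Real.sin_pos_of_pos_of_lt_pi (by linarith) (by linarith)
  have h2 : Complex.exp L = Complex.exp ((Real.log (2 * Real.sin (x/2)) : ℝ) + ((a + (x - Real.pi)/2 : ℝ) : ℂ) * Complex.I) := by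
    rw [h, Complex.exp_add, ← Complex.ofReal_exp, Real.exp_log (by linarith)]
    have e1 : Complex.exp ((a + (x - Real.pi)/2 : ℝ) * Complex.I) = Complex.exp ((a + x/2 : ℝ) * Complex.I) * (-Complex.I) := by
      rw [← Complex.exp_neg_pi_div_two_mul_I, ← Complex.exp_add]
      congr 1; push_cast; ring
    have e2 : Complex.exp (a * Complex.I) = Complex.exp ((a + x/2 : ℝ) * Complex.I) * Complex.exp (-(((x/2 : ℝ):ℂ) * Complex.I)) := by
      rw [← Complex.exp_add]; congr 1; push_cast; ring
    have e3 : Complex.exp ((a + x : ℝ) * Complex.I) = Complex.exp ((a + x/2 : ℝ) * Complex.I) * Complex.exp (((x/2 : ℝ):ℂ) * Complex.I) := by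
      rw [← Complex.exp_add]; congr 1; push_cast; ring
    rw [e1, e2, e3]
    have e4 : ((2 * Real.sin (x/2) : ℝ) : ℂ) = (Complex.exp (-(((x/2 : ℝ):ℂ) * Complex.I)) - Complex.exp (((x/2 : ℝ):ℂ) * Complex.I)) * Complex.I := by
      rw [Complex.ofReal_mul, Complex.ofReal_sin, Complex.sin]; push_cast; ring_nf
    rw [e4]
    linear_combination ((Complex.exp ((a + x/2 : ℝ) * Complex.I)) * (Complex.exp (-(((x/2 : ℝ):ℂ) * Complex.I)) - Complex.exp (((x/2 : ℝ):ℂ) * Complex.I))) * Complex.I_mul_I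
  obtain ⟨k, hk⟩ := Complex.exp_eq_exp_iff_exists_int.1 h2
  refine ⟨k, ?_⟩
  rw [hk]
  simp
  ring

lemma side_change (L γ : ℝ → ℂ) (hL : Continuous L) (a x0 x1 : ℝ)
    (hb : ∀ t, ‖γ t‖ ≤ 1) (hne : ∀ t, γ t ≠ Complex.exp (a * Complex.I))
    (he : ∀ t, Complex.exp (L t) = Complex.exp (a * Complex.I) - γ t)
    (h0 : γ 0 = Complex.exp ((a + x0 : ℝ) * Complex.I)) (h1 : γ 1 = Complex.exp ((a + x1 : ℝ) * Complex.I))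
    (hx0 : 0 < x0) (hx0' : x0 < 2 * Real.pi) (hx1 : 0 < x1) (hx1' : x1 < 2 * Real.pi) :
    (L 1).im - (L 0).im = (x1 - x0) / 2 := by
  obtain ⟨k0, hk0⟩ := corner_aux (L 0) a x0 hx0 hx0' (by rw [he, h0])
  obtain ⟨k1, hk1⟩ := corner_aux (L 1) a x1 hx1 hx1' (by rw [he, h1])
  have hpi := Real.pi_pos
  have := side_aux (fun t => (L t).im - a) (by fun_prop) ?_ _ _ k0 k1 hk0 hk1
    (by rw [abs_lt]; constructor <;> linarith) (by rw [abs_lt]; constructor <;> linarith)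
  · linarith
  intro t
  have e : Complex.exp (L t - a * Complex.I) = 1 - γ t * Complex.exp (-(a * Complex.I)) := by
    rw [sub_eq_add_neg, Complex.exp_add, he, sub_mul, ← Complex.exp_add]; simp
  set w := γ t * Complex.exp (-(a * Complex.I)) with hw
  have hn : ‖Complex.exp (-(a * Complex.I))‖ = 1 := by
    have := Complex.norm_exp_ofReal_mul_I (-a)
    simpa using this
  have hw1 : ‖w‖ ≤ 1 := by rw [hw, norm_mul, hn]; simpa using hb t
  have hwne : w ≠ 1 := by
    intro h
    apply hne t
    have : γ t = w * Complex.exp (a * Complex.I) := by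
      rw [hw, mul_assoc, ← Complex.exp_add]; simp
    rw [this, h, one_mul]
  have hre : w.re < 1 := by
    rcases lt_or_eq_of_le ((Complex.re_le_norm w).trans hw1) with h | h
    · exact h
    · exfalso
      apply hwne
      have h3 : w.re ^ 2 + w.im ^ 2 ≤ 1 := by
        have := Complex.sq_norm w
        rw [Complex.normSq_apply] at this
        nlinarith [norm_nonneg w]
      have h4 : w.im = 0 := by
        rw [h] at h3; nlinarith [sq_nonneg w.im]
      apply Complex.ext <;> simp [h, h4]
  have h5 : (Complex.exp (L t - a * Complex.I)).re = 1 - w.re := by rw [e]; simp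
  rw [Complex.exp_re] at h5
  have h6 : 0 < Real.exp (L t - a * Complex.I).re := Real.exp_pos _
  have h7 : (L t - a * Complex.I).im = (L t).im - a := by simp
  rw [h7] at h5
  by_contra hcon
  push Not at hcon
  nlinarith

lemma crossing (α β : ℝ → ℂ) (hα : Continuous α) (hβ : Continuous β)
    (hα1 : ∀ t, ‖α t‖ ≤ 1) (hβ1 : ∀ t, ‖β t‖ ≤ 1) (hne : ∀ s t, α s ≠ β t)
    (θ δ ω : ℝ) (hδ : 0 < δ) (hω : δ < ω) (hω' : ω < 2 * Real.pi - δ)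
    (a0 : α 0 = Complex.exp (θ * Complex.I)) (a1 : α 1 = Complex.exp ((θ + ω : ℝ) * Complex.I))
    (b0 : β 0 = Complex.exp ((θ - δ : ℝ) * Complex.I)) (b1 : β 1 = Complex.exp ((θ + δ : ℝ) * Complex.I)) : False := by
  have hpi := Real.pi_pos
  obtain ⟨F, ⟨-, hF⟩, -⟩ := Complex.isCoveringMapOn_exp.existsUnique_continuousMap_lifts
    (A := ℝ × ℝ) ⟨fun p => α p.1 - β p.2, by fun_prop⟩ (a₀ := (0,0))
    (Complex.exp_log (x := α 0 - β 0) (sub_ne_zero.2 (hne 0 0)))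
    (fun p => by simpa [sub_eq_zero] using hne p.1 p.2)
  have hF' : ∀ s t, Complex.exp (F (s, t)) = α s - β t := fun s t => congrFun hF (s, t)
  have per : ∀ x y : ℝ, y = x + 2 * Real.pi → Complex.exp (x * Complex.I) = Complex.exp (y * Complex.I) := by
    rintro x y rfl
    rw [Complex.exp_eq_exp_iff_exists_int]
    exact ⟨-1, by push_cast; ring⟩
  have neg : ∀ z : ℂ, Complex.exp (z + Real.pi * Complex.I) = - Complex.exp z := by
    intro z; rw [Complex.exp_add, Complex.exp_pi_mul_I]; ring
  have s0 := side_change (fun t => F (0, t)) β (by fun_prop) θ (2 * Real.pi - δ) δ hβ1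
    (fun t => a0 ▸ (hne 0 t).symm) (fun t => by rw [hF', a0]) (by rw [b0]; apply per; ring)
    (by rw [b1]) (by linarith) (by linarith) (by linarith) (by linarith)
  have s1 := side_change (fun t => F (1, t)) β (by fun_prop) (θ + ω) (2 * Real.pi - ω - δ) (2 * Real.pi - ω + δ) hβ1
    (fun t => a1 ▸ (hne 1 t).symm) (fun t => by rw [hF', a1]) (by rw [b0]; apply per; ring)
    (by rw [b1]; apply per; ring) (by linarith) (by linarith) (by linarith) (by linarith)
  have t0 := side_change (fun s => F (s, 0) + Real.pi * Complex.I) α (by fun_prop) (θ - δ) δ (ω + δ) hα1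
    (fun s => b0 ▸ (hne s 0)) (fun t => by rw [neg, hF', b0]; ring) (by rw [a0]; congr 3; ring)
    (by rw [a1]; congr 3; ring) (by linarith) (by linarith) (by linarith) (by linarith)
  have t1 := side_change (fun s => F (s, 1) + Real.pi * Complex.I) α (by fun_prop) (θ + δ) (2 * Real.pi - δ) (ω - δ) hα1
    (fun s => b1 ▸ (hne s 1)) (fun t => by rw [neg, hF', b1]; ring) (by rw [a0]; apply per; ring)
    (by rw [a1]; congr 3; ring) (by linarith) (by linarith) (by linarith) (by linarith)
  simp at s0 s1 t0 t1
  linarith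


abbrev DD : Set E2 := Metric.closedBall (0 : E2) 1

def toC (x : E2) : ℂ := ⟨x 0, x 1⟩

lemma toC_cont : Continuous toC := by
  have : toC = fun x : E2 => ((x 0 : ℝ) : ℂ) + ((x 1 : ℝ) : ℂ) * Complex.I := by
    funext x; apply Complex.ext <;> simp [toC]
  rw [this]; fun_prop

lemma toC_norm (x : E2) : ‖toC x‖ = ‖x‖ := by
  rw [Complex.norm_eq_sqrt_sq_add_sq, EuclideanSpace.norm_eq]
  simp [toC]

lemma toC_inj {x y : E2} (h : toC x = toC y) : x = y := by
  have h0 := congrArg Complex.re h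
  have h1 := congrArg Complex.im h
  ext i; fin_cases i
  · exact h0
  · exact h1

@[simp] lemma sphPt_zero (t : ℝ) : sphPt t 0 = Real.cos t := rfl
@[simp] lemma sphPt_one (t : ℝ) : sphPt t 1 = Real.sin t := rfl

lemma toC_sphPt (t : ℝ) : toC (sphPt t) = Complex.exp (t * Complex.I) := by
  apply Complex.ext
  · rw [Complex.exp_ofReal_mul_I_re]; rfl
  · rw [Complex.exp_ofReal_mul_I_im]; rfl

lemma norm_sphPt (t : ℝ) : ‖sphPt t‖ = 1 := by
  rw [← toC_norm, toC_sphPt, Complex.norm_exp_ofReal_mul_I]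

lemma sphPt_mem (t : ℝ) : sphPt t ∈ DD := by
  simp [norm_sphPt]

lemma sphPt_eq (t : ℝ) : sphPt t = !₂[Real.cos t, Real.sin t] := rfl

lemma sphPt_contDiff : ContDiff ℝ (⊤ : ℕ∞) sphPt := by
  rw [contDiff_euclidean]
  intro i; fin_cases i
  · exact Real.contDiff_cos
  · exact Real.contDiff_sin

lemma sphPt_periodic : Function.Periodic sphPt (2 * Real.pi) := by
  intro t
  ext i; fin_cases i <;> simp

lemma crossing_E2 (A B : Set E2) (hAB : Disjoint A B) (θ δ ω : ℝ) (hδ : 0 < δ) (hω : δ < ω)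
    (hω' : ω < 2 * Real.pi - δ) (h1 : JoinedIn (DD ∩ A) (sphPt θ) (sphPt (θ + ω)))
    (h2 : JoinedIn (DD ∩ B) (sphPt (θ - δ)) (sphPt (θ + δ))) : False := by
  obtain ⟨γ, hγ⟩ := h1
  obtain ⟨η, hη⟩ := h2
  have e1 : ∀ t, γ.extend t ∈ DD ∩ A := by
    intro t
    have := Set.mem_range_self (f := γ.extend) t
    rw [Path.extend_range] at this
    obtain ⟨s, hs⟩ := this
    rw [← hs]; exact hγ s
  have e2 : ∀ t, η.extend t ∈ DD ∩ B := by
    intro t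
    have := Set.mem_range_self (f := η.extend) t
    rw [Path.extend_range] at this
    obtain ⟨s, hs⟩ := this
    rw [← hs]; exact hη s
  refine crossing (fun t => toC (γ.extend t)) (fun t => toC (η.extend t))
    (toC_cont.comp γ.continuous_extend) (toC_cont.comp η.continuous_extend) ?_ ?_ ?_ θ δ ω hδ hω hω' ?_ ?_ ?_ ?_
  · intro t; rw [toC_norm]; simpa using (e1 t).1
  · intro t; rw [toC_norm]; simpa using (e2 t).1
  · intro s t h
    have := toC_inj h
    exact Set.disjoint_left.1 hAB (e1 s).2 (this ▸ (e2 t).2)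
  all_goals simp [toC_sphPt]

lemma exists_locmax (f : E2 → ℝ) (hf : Continuous f) (p : E2) (hp : p ∈ DD) (c : ℝ) (hc : c < f p) :
    ∃ q, JoinedIn (DD ∩ {x | c < f x}) p q ∧ IsLocalMaxOn f DD q := by
  set U : Set E2 := {q | JoinedIn (DD ∩ {x | c < f x}) p q} with hU
  have hUD : U ⊆ DD := fun q hq => hq.target_mem.1
  have hpU : p ∈ U := JoinedIn.refl ⟨hp, hc⟩
  have hcl : closure U ⊆ DD := closure_minimal hUD Metric.isClosed_closedBall
  have hK : IsCompact (closure U) := (isCompact_closedBall (0 : E2) 1).of_isClosed_subset isClosed_closure hcl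
  obtain ⟨z, hz, hmax⟩ := hK.exists_isMaxOn ⟨p, subset_closure hpU⟩ hf.continuousOn
  have hzc : c < f z := hc.trans_le (hmax (subset_closure hpU))
  have hop : IsOpen {x | c < f x} := isOpen_lt continuous_const hf
  obtain ⟨ε, hε, hball⟩ := Metric.isOpen_iff.1 hop z hzc
  obtain ⟨u, hu, hzu⟩ := Metric.mem_closure_iff.1 hz ε hε
  have hsub : Metric.ball z ε ∩ DD ⊆ U := by
    rintro v ⟨hv, hvD⟩
    have hconv : Convex ℝ (Metric.ball z ε ∩ DD) := (convex_ball z ε).inter (convex_closedBall 0 1)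
    have hseg : segment ℝ u v ⊆ DD ∩ {x | c < f x} := by
      intro y hy
      have := hconv.segment_subset ⟨by rw [Metric.mem_ball, dist_comm]; exact hzu, hUD hu⟩ ⟨hv, hvD⟩ hy
      exact ⟨this.2, hball this.1⟩
    exact JoinedIn.trans hu (JoinedIn.of_segment_subset hseg)
  refine ⟨z, hsub ⟨Metric.mem_ball_self hε, hcl hz⟩, ?_⟩
  have : Metric.ball z ε ∩ DD ∈ nhdsWithin z DD := by
    rw [Set.inter_comm]
    exact inter_mem_nhdsWithin _ (Metric.ball_mem_nhds z hε)
  filter_upwards [this] with v hv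
  exact hmax (subset_closure (hsub hv))

lemma exists_locmin (f : E2 → ℝ) (hf : Continuous f) (p : E2) (hp : p ∈ DD) (c : ℝ) (hc : f p < c) :
    ∃ q, JoinedIn (DD ∩ {x | f x < c}) p q ∧ IsLocalMinOn f DD q := by
  obtain ⟨q, h1, h2⟩ := exists_locmax (fun x => - f x) hf.neg p hp (-c) (by linarith)
  refine ⟨q, ?_, ?_⟩
  · have : {x | f x < c} = {x | -c < - f x} := by ext x; simp
    rw [this]; exact h1
  · simpa using h2.neg

lemma forest {ι α : Type*} [DecidableEq ι] [DecidableEq α] (a b : ι → α) (M : ι → ℝ) (W : ι → Set α) :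
    ∀ n : ℕ, ∀ S : Finset ι, S.card = n → ∀ Y : Finset α, Y.Nonempty →
    (∀ i ∈ S, a i ∈ Y ∧ b i ∈ Y ∧ a i ∈ W i ∧ b i ∉ W i) →
    (∀ i ∈ S, ∀ j ∈ S, i ≠ j → M j ≤ M i → (a j ∈ W i ↔ b j ∈ W i)) → S.card + 1 ≤ Y.card := by
  classical
  intro n
  induction n using Nat.strong_induction_on with
  | _ n ih =>
    intro S hS Y hY h1 h2
    rcases S.eq_empty_or_nonempty with rfl | hne
    · simpa using hY.card_pos
    obtain ⟨i, hi, hmax⟩ := S.exists_max_image M hne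
    have hc : (S.erase i).card + 1 = S.card := Finset.card_erase_add_one hi
    set T1 := (S.erase i).filter (fun j => a j ∈ W i) with hT1
    set T2 := (S.erase i).filter (fun j => ¬ a j ∈ W i) with hT2
    have hT : T1.card + T2.card = (S.erase i).card := Finset.card_filter_add_card_filter_not _
    have hYc : (Y.filter (· ∈ W i)).card + (Y.filter (¬ · ∈ W i)).card = Y.card :=
      Finset.card_filter_add_card_filter_not _
    have t1 := ih T1.card (by omega) T1 rfl (Y.filter (· ∈ W i)) ⟨a i, by simp [h1 i hi]⟩ (by
      intro j hj
      simp only [hT1, Finset.mem_filter, Finset.mem_erase] at hj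
      have := h1 j hj.1.2
      have h3 := h2 i hi j hj.1.2 (Ne.symm hj.1.1) (hmax j hj.1.2)
      simp only [Finset.mem_filter]
      tauto) (by
      intro k hk j hj
      simp only [hT1, Finset.mem_filter, Finset.mem_erase] at hj hk
      exact h2 k hk.1.2 j hj.1.2)
    have t2 := ih T2.card (by omega) T2 rfl (Y.filter (¬ · ∈ W i)) ⟨b i, by simp [h1 i hi]⟩ (by
      intro j hj
      simp only [hT2, Finset.mem_filter, Finset.mem_erase] at hj
      have := h1 j hj.1.2
      have h3 := h2 i hi j hj.1.2 (Ne.symm hj.1.1) (hmax j hj.1.2)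
      simp only [Finset.mem_filter]
      tauto) (by
      intro k hk j hj
      simp only [hT2, Finset.mem_filter, Finset.mem_erase] at hj hk
      exact h2 k hk.1.2 j hj.1.2)
    omega

lemma exists_level {ι : Type*} [Fintype ι] (M : ι → ℝ) (i : ι) (m : ℝ) (hm : m < M i) :
    ∃ c, m < c ∧ c < M i ∧ ∀ j, M j < M i → M j < c := by
  classical
  have : ∀ᶠ c in nhdsWithin (M i) (Set.Iio (M i)), m < c ∧ c < M i ∧ ∀ j, M j < M i → M j < c := by
    have e1 : ∀ᶠ c in nhdsWithin (M i) (Set.Iio (M i)), m < c :=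
      nhdsWithin_le_nhds (lt_mem_nhds hm)
    have e2 : ∀ᶠ c in nhdsWithin (M i) (Set.Iio (M i)), c < M i := self_mem_nhdsWithin
    have e3 : ∀ᶠ c in nhdsWithin (M i) (Set.Iio (M i)), ∀ j, M j < M i → M j < c := by
      rw [Filter.eventually_all]
      intro j
      by_cases h : M j < M i
      · filter_upwards [nhdsWithin_le_nhds (lt_mem_nhds h)] with c hc _ using hc
      · simp [h]
    filter_upwards [e1, e2, e3] with c h1 h2 h3 using ⟨h1, h2, h3⟩
  exact this.exists

lemma main_lower {ι : Type*} [Fintype ι] (f : E2 → ℝ) (hf : Continuous f) (p : ι → ℝ)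
    (hinj : Function.Injective (fun i => f (sphPt (p i))))
    (hp : ∀ i, ∃ δ : ℝ, 0 < δ ∧ δ < Real.pi ∧ ∀ s, |s| ≤ δ → s ≠ 0 → f (sphPt (p i + s)) < f (sphPt (p i)))
    (X Y : Finset E2) (hX : ∀ q, q ∈ DD → IsLocalMaxOn f DD q → q ∈ X) (hY : ∀ q, q ∈ DD → IsLocalMinOn f DD q → q ∈ Y) :
    Fintype.card ι + 1 ≤ X.card + Y.card := by
  classical
  set M : ι → ℝ := fun i => f (sphPt (p i)) with hM
  choose δ hδ0 hδπ hδ using hp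
  have hlx : ∀ i, f (sphPt (p i - δ i)) < M i := fun i => by
    have := hδ i (-δ i) (by simp [abs_of_pos (hδ0 i)]) (by linarith [hδ0 i])
    simpa [sub_eq_add_neg] using this
  have hly : ∀ i, f (sphPt (p i + δ i)) < M i := fun i =>
    hδ i (δ i) (by simp [abs_of_pos (hδ0 i)]) (by linarith [hδ0 i])
  choose c hc1 hc2 hc3 using fun i => exists_level M i _ (max_lt (hlx i) (hly i))
  have hcx : ∀ i, f (sphPt (p i - δ i)) < c i := fun i => (le_max_left _ _).trans_lt (hc1 i)
  have hcy : ∀ i, f (sphPt (p i + δ i)) < c i := fun i => (le_max_right _ _).trans_lt (hc1 i)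
  choose q hq1 hq2 using fun i => exists_locmax f hf (sphPt (p i)) (sphPt_mem _) (c i) (hc2 i)
  choose a ha1 ha2 using fun i => exists_locmin f hf (sphPt (p i - δ i)) (sphPt_mem _) (c i) (hcx i)
  choose b hb1 hb2 using fun i => exists_locmin f hf (sphPt (p i + δ i)) (sphPt_mem _) (c i) (hcy i)
  set S : Finset ι := Finset.univ.filter (fun i => ∃ j, M i < M j ∧
    JoinedIn (DD ∩ {x | c i < f x}) (sphPt (p i)) (sphPt (p j))) with hS
  have hmono : ∀ {c c' : ℝ}, c ≤ c' → DD ∩ {x | f x < c} ⊆ DD ∩ {x | f x < c'} :=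
    fun h x hx => ⟨hx.1, lt_of_lt_of_le hx.2 h⟩
  -- maxima
  have hXc : (Sᶜ).card ≤ X.card := by
    apply Finset.card_le_card_of_injOn q
    · intro i _
      exact hX _ (hq1 i).target_mem.1 (hq2 i)
    · have aux : ∀ i ∉ S, ∀ j, M i < M j → q i ≠ q j := by
        intro i hi j hij he
        apply hi
        simp only [hS, Finset.mem_filter, Finset.mem_univ, true_and]
        refine ⟨j, hij, (hq1 i).trans ?_⟩
        rw [he]
        refine (hq1 j).symm.mono ?_
        intro x hx
        exact ⟨hx.1, ((hc2 i).trans (hc3 j i hij)).trans hx.2⟩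
      intro i hi j hj he
      simp only [Finset.coe_compl, Set.mem_compl_iff, Finset.mem_coe] at hi hj
      rcases lt_trichotomy (M i) (M j) with h | h | h
      · exact absurd he (aux i hi j h)
      · exact hinj h
      · exact absurd he.symm (aux j hj i h)
  -- minima
  have hYc : S.card + 1 ≤ Y.card := by
    refine forest a b M (fun i => {z | JoinedIn (DD ∩ {x | f x < c i}) (sphPt (p i - δ i)) z}) _ S rfl Y ?_ ?_ ?_
    · obtain ⟨z, h1, h2⟩ := exists_locmin f hf (sphPt 0) (sphPt_mem _) (f (sphPt 0) + 1) (by linarith)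
      exact ⟨z, hY z h1.target_mem.1 h2⟩
    · intro i hi
      refine ⟨hY _ (ha1 i).target_mem.1 (ha2 i), hY _ (hb1 i).target_mem.1 (hb2 i), ha1 i, ?_⟩
      intro hbad
      have hj2 := JoinedIn.trans hbad (hb1 i).symm
      simp only [hS, Finset.mem_filter, Finset.mem_univ, true_and] at hi
      obtain ⟨j, hij, hj1⟩ := hi
      -- angle
      obtain ⟨ω, hω0, hω1, hω⟩ : ∃ ω, 0 ≤ ω ∧ ω < 2 * Real.pi ∧ sphPt (p j) = sphPt (p i + ω) := by
        have hm := toIcoMod_mem_Ico Real.two_pi_pos (p i) (p j)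
        refine ⟨toIcoMod Real.two_pi_pos (p i) (p j) - p i, by linarith [hm.1], by linarith [hm.2], ?_⟩
        have := self_sub_toIcoDiv_zsmul Real.two_pi_pos (p i) (p j)
        rw [add_sub_cancel, ← this]
        exact (sphPt_periodic.sub_zsmul_eq _).symm
      have hle : ∀ s, |s| ≤ δ i → f (sphPt (p i + s)) ≤ M i := by
        intro s hs
        by_cases h : s = 0
        · simp [h, hM]
        · exact (hδ i s hs h).le
      have hMj : M j = f (sphPt (p i + ω)) := by simp only [hM, hω]
      refine crossing_E2 {x | c i < f x} {x | f x < c i} ?_ (p i) (δ i) ω (hδ0 i) ?_ ?_ (hω ▸ hj1) hj2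
      · rw [Set.disjoint_left]; intro x (hx : c i < f x) (hx' : f x < c i); exact lt_asymm hx hx'
      · by_contra h
        push Not at h
        have := hle ω (by rw [abs_of_nonneg hω0]; exact h)
        linarith
      · by_contra h
        push Not at h
        have := hle (ω - 2 * Real.pi) (by rw [abs_le]; constructor <;> linarith [hδ0 i])
        have h3 : sphPt (p i + ω) = sphPt (p i + (ω - 2 * Real.pi)) := by
          rw [← sphPt_periodic (p i + (ω - 2 * Real.pi))]; congr 1; ring
        rw [← h3] at this
        linarith
    · intro i _ j _ hij hle
      have hlt : M j < M i := lt_of_le_of_ne hle (fun h => hij (hinj h).symm)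
      have hjc := hc3 i j hlt
      have hc : c j ≤ c i := ((hc2 j).trans hjc).le
      have k1 : JoinedIn (DD ∩ {x | f x < c i}) (a j) (sphPt (p j - δ j)) := (ha1 j).symm.mono (hmono hc)
      have k2 : JoinedIn (DD ∩ {x | f x < c i}) (sphPt (p j + δ j)) (b j) := (hb1 j).mono (hmono hc)
      have k3 : JoinedIn (DD ∩ {x | f x < c i}) (sphPt (p j - δ j)) (sphPt (p j + δ j)) := by
        have hco : IsPathConnected (sphPt '' (Set.Icc (p j - δ j) (p j + δ j))) := by
          refine IsPathConnected.image ?_ sphPt_contDiff.continuous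
          exact (convex_Icc _ _).isPathConnected ⟨p j, by constructor <;> linarith [hδ0 j]⟩
        refine (hco.joinedIn _ ⟨_, ⟨le_rfl, by linarith [hδ0 j]⟩, rfl⟩ _ ⟨_, ⟨by linarith [hδ0 j], le_rfl⟩, rfl⟩).mono ?_
        rintro _ ⟨s, hs, rfl⟩
        refine ⟨sphPt_mem _, lt_of_le_of_lt ?_ hjc⟩
        by_cases h : s = p j
        · rw [h]
        · have := hδ j (s - p j) (by rw [abs_le]; constructor <;> linarith [hs.1, hs.2]) (sub_ne_zero.2 h)
          rw [add_sub_cancel] at this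
          exact this.le
      have k := (k1.trans k3).trans k2
      exact ⟨fun h => JoinedIn.trans h k, fun h => JoinedIn.trans h k.symm⟩
  have := Finset.card_add_card_compl S
  omega


lemma exists_angle (z : E2) (hz : ‖z‖ = 1) : ∃ t ∈ Set.Ico (0:ℝ) (2 * Real.pi), z = sphPt t := by
  have h : z = sphPt (Complex.arg (toC z)) := by
    apply toC_inj
    rw [toC_sphPt]
    have := Complex.norm_mul_exp_arg_mul_I (toC z)
    rw [toC_norm, hz] at this
    simpa using this.symm
  refine ⟨toIcoMod Real.two_pi_pos 0 (Complex.arg (toC z)), by simpa using toIcoMod_mem_Ico Real.two_pi_pos 0 (Complex.arg (toC z)), ?_⟩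
  rw [← self_sub_toIcoDiv_zsmul, sphPt_periodic.sub_zsmul_eq]
  exact h

lemma not_max_min_of_deriv2 (g : ℝ → ℝ) (t : ℝ) (h1 : IsLocalMax g t) (h2 : IsLocalMin g t) :
    deriv (deriv g) t = 0 := by
  have h : g =ᶠ[nhds t] fun _ => g t := by
    filter_upwards [h1, h2] with s a b using le_antisymm a b
  rw [h.deriv.deriv_eq]
  simp

lemma interior_max {n : ℕ} (a : Ribbon n) (hneg : ∀ i, a.ν i = -1) (f : E2 → ℝ) (hf : IsExtension a f)
    (z : E2) (hz : z ∈ DD) (hmax : IsLocalMaxOn f DD z) : z ∈ Metric.ball (0:E2) 1 ∧ IsLocalMax f z := by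
  obtain ⟨hsm, hg, -, hν⟩ := hf
  have hzb : z ∈ Metric.ball (0:E2) 1 := by
    by_contra hnot
    have hz1 : ‖z‖ = 1 := by
      simp at hz hnot; exact le_antisymm hz hnot
    obtain ⟨t, ht, rfl⟩ := exists_angle z hz1
    have hgmax : IsLocalMax a.g t := by
      have : Filter.Tendsto sphPt (nhds t) (nhdsWithin (sphPt t) DD) :=
        tendsto_nhdsWithin_iff.2 ⟨sphPt_contDiff.continuous.continuousAt, Filter.Eventually.of_forall sphPt_mem⟩
      filter_upwards [this.eventually hmax] with s hs
      rw [← hg, ← hg]; exact hs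
    obtain ⟨i, rfl⟩ := a.crit_only t ht hgmax.deriv_eq_zero
    have hlt : deriv (deriv a.g) (a.θ i) < 0 := by
      rcases lt_trichotomy (deriv (deriv a.g) (a.θ i)) 0 with h | h | h
      · exact h
      · exact absurd h (a.node_nondeg i)
      · exact absurd (not_max_min_of_deriv2 _ _ hgmax (isLocalMin_of_deriv_deriv_pos h (a.node_crit i)
          a.smooth_g.continuous.continuousAt)) (a.node_nondeg i)
    have hr := (hν i).1 hlt
    rw [hneg i, inner_gradient_left] at hr
    set p := sphPt (a.θ i) with hp
    have hd : HasDerivAt (fun r : ℝ => f (r • p)) (fderiv ℝ f p p) 1 := by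
      have h1 : HasFDerivAt f (fderiv ℝ f p) ((1:ℝ) • p) := by
        rw [one_smul]; exact (hsm.differentiable (by simp) p).hasFDerivAt
      have h2 : HasDerivAt (fun r : ℝ => r • p) ((1:ℝ) • p) 1 := (hasDerivAt_id (1:ℝ)).smul_const p
      have := h1.comp_hasDerivAt (1:ℝ) h2
      rw [one_smul] at this
      exact this
    have hneg' : fderiv ℝ f p p < 0 := by push_cast at hr; linarith
    -- eventually f (r p) ≤ f p for r < 1
    have hev : ∀ᶠ r in nhdsWithin (1:ℝ) (Set.Iio 1), f (r • p) ≤ f p := by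
      have ht : Filter.Tendsto (fun r : ℝ => r • p) (nhdsWithin (1:ℝ) (Set.Iio 1)) (nhdsWithin p DD) := by
        rw [tendsto_nhdsWithin_iff]
        constructor
        · have : ContinuousAt (fun r : ℝ => r • p) 1 := by fun_prop
          have h2 := this.tendsto
          rw [one_smul] at h2
          exact h2.mono_left nhdsWithin_le_nhds
        · have e1 : ∀ᶠ r in nhdsWithin (1:ℝ) (Set.Iio 1), (0:ℝ) < r := nhdsWithin_le_nhds (lt_mem_nhds one_pos)
          filter_upwards [e1, self_mem_nhdsWithin] with r hr0 hr1
          have : r < 1 := hr1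
          simp [norm_smul, hz1, abs_of_pos hr0, this.le]
      exact ht.eventually hmax
    have hsl := hasDerivAt_iff_tendsto_slope_left_right.1 hd |>.1
    have hsl2 : ∀ᶠ r in nhdsWithin (1:ℝ) (Set.Iio 1), slope (fun r : ℝ => f (r • p)) 1 r < 0 :=
      hsl.eventually (gt_mem_nhds hneg')
    obtain ⟨r, h1, h2, h3⟩ := (hev.and (hsl2.and self_mem_nhdsWithin)).exists
    have h3 : r < 1 := h3
    rw [slope_def_field, one_smul] at h2
    have : 0 ≤ (f (r • p) - f p) / (r - 1) := div_nonneg_of_nonpos (by linarith) (by linarith)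
    linarith
  refine ⟨hzb, hmax.isLocalMax ?_⟩
  exact Filter.mem_of_superset (Metric.isOpen_ball.mem_nhds hzb) Metric.ball_subset_closedBall

def Ribbon.neg {n : ℕ} (a : Ribbon n) : Ribbon n where
  g := fun t => - a.g t
  θ := a.θ
  ν := a.ν
  n_even := a.n_even
  n_pos := a.n_pos
  smooth_g := a.smooth_g.neg
  periodic_g := fun t => by simp [a.periodic_g t]
  theta_mem := a.theta_mem
  theta_mono := a.theta_mono
  node_crit := fun i => by simp [a.node_crit i]
  node_nondeg := fun i => by simp [a.node_nondeg i]
  crit_only := fun t ht h => a.crit_only t ht (by simpa using h)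
  values_distinct := fun i j h => a.values_distinct i j (by simpa using h)
  nu_sign := a.nu_sign

lemma neg_ext {n : ℕ} (a : Ribbon n) (f : E2 → ℝ) (hf : IsExtension a f) : IsExtension a.neg (fun x => - f x) := by
  obtain ⟨h1, h2, h3, h4⟩ := hf
  refine ⟨h1.neg, fun t => by simp [h2, Ribbon.neg], fun x hx => by simpa using h3 x hx, fun i => ?_⟩
  have h5 := h4 i
  simp only [inner_gradient_left, Ribbon.neg, deriv.fun_neg', fderiv_fun_neg] at h5 ⊢
  simp only [neg_lt_zero, Left.neg_pos_iff, neg_apply, mul_neg]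
  exact ⟨h5.2, h5.1⟩

lemma neg_neg_ext {n : ℕ} (a : Ribbon n) (f : E2 → ℝ) (hf : IsExtension a.neg f) : IsExtension a (fun x => - f x) := by
  have := neg_ext a.neg f hf
  have e : a.neg.neg = a := by cases a; simp [Ribbon.neg]
  rwa [e] at this

lemma critPts_neg (f : E2 → ℝ) : critPts (fun x => - f x) = critPts f := by
  ext x; simp [critPts]

lemma interior_min {n : ℕ} (a : Ribbon n) (hneg : ∀ i, a.ν i = -1) (f : E2 → ℝ) (hf : IsExtension a f)
    (z : E2) (hz : z ∈ DD) (hmin : IsLocalMinOn f DD z) : z ∈ Metric.ball (0:E2) 1 ∧ IsLocalMin f z := by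
  have := interior_max a.neg hneg _ (neg_ext a f hf) z hz hmin.neg
  exact ⟨this.1, by simpa using this.2.neg⟩

def Ribbon.maxN {n : ℕ} (a : Ribbon n) : ℕ := Fintype.card {i : Fin n // deriv (deriv a.g) (a.θ i) < 0}

lemma strict_arc {n : ℕ} (a : Ribbon n) (i : Fin n) (h : deriv (deriv a.g) (a.θ i) < 0) :
    ∃ δ : ℝ, 0 < δ ∧ δ < Real.pi ∧ ∀ s, |s| ≤ δ → s ≠ 0 → a.g (a.θ i + s) < a.g (a.θ i) := by
  set t := a.θ i with ht
  have hev := eventually_nhdsWithin_sign_eq_of_deriv_neg h (a.node_crit i)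
  rw [Metric.eventually_nhds_iff] at hev
  obtain ⟨ε, hε, hev⟩ := hev
  have hdiff : Differentiable ℝ a.g := a.smooth_g.differentiable (by simp)
  refine ⟨min (ε / 2) 1, by positivity, (min_le_right _ _).trans_lt (by linarith [Real.pi_gt_three]), ?_⟩
  intro s hs hs0
  have hsε : |s| < ε := by
    have := min_le_left (ε/2) 1
    linarith
  rcases lt_or_gt_of_ne hs0 with hneg | hpos
  · obtain ⟨c, hc, hcd⟩ := exists_deriv_eq_slope a.g (a := t + s) (b := t) (by linarith)
      hdiff.continuous.continuousOn hdiff.differentiableOn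
    have h1 := hev (y := c) (by rw [Real.dist_eq, abs_lt]; rw [abs_lt] at hsε; constructor <;> linarith [hc.1, hc.2])
    rw [sign_pos (a := t - c) (by linarith [hc.2]), sign_eq_one_iff, hcd] at h1
    have h2 : 0 < t - (t + s) := by linarith
    have := (div_pos_iff_of_pos_right h2).1 h1
    linarith
  · obtain ⟨c, hc, hcd⟩ := exists_deriv_eq_slope a.g (a := t) (b := t + s) (by linarith)
      hdiff.continuous.continuousOn hdiff.differentiableOn
    have h1 := hev (y := c) (by rw [Real.dist_eq, abs_lt]; rw [abs_lt] at hsε; constructor <;> linarith [hc.1, hc.2])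
    rw [sign_neg (a := t - c) (by linarith [hc.1]), sign_eq_neg_one_iff, hcd] at h1
    have h2 : 0 < (t + s) - t := by linarith
    by_contra hcon
    push Not at hcon
    have := div_nonneg (sub_nonneg.2 hcon) h2.le
    linarith

lemma lower_max {n : ℕ} (a : Ribbon n) (hneg : ∀ i, a.ν i = -1) (f : E2 → ℝ) (hf : IsExtension a f) :
    ((a.maxN + 1 : ℕ) : ℕ∞) ≤ (critPts f).encard := by
  classical
  by_cases hfin : (critPts f).Finite
  swap
  · rw [Set.not_finite.1 hfin |>.encard_eq]; exact le_top
  have hcont : Continuous f := hf.1.continuous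
  set X : Finset E2 := hfin.toFinset.filter (fun z => IsLocalMax f z)
  set Y : Finset E2 := hfin.toFinset.filter (fun z => IsLocalMin f z)
  have hdis : Disjoint X Y := by
    rw [Finset.disjoint_left]
    intro z hz1 hz2
    simp only [X, Y, Finset.mem_filter, Set.Finite.mem_toFinset] at hz1 hz2
    have h : f =ᶠ[nhds z] fun _ => f z := by
      filter_upwards [hz1.2, hz2.2] with s a b using le_antisymm a b
    have h2 : ∀ᶠ y in nhds z, y ∈ critPts f := by
      filter_upwards [h.eventuallyEq_nhds, Metric.isOpen_ball.mem_nhds hz1.1.1] with y hy hyb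
      refine ⟨hyb, ?_⟩
      rw [hy.fderiv_eq]; simp
    exact infinite_of_mem_nhds z h2 hfin
  have hmain := main_lower (ι := {i : Fin n // deriv (deriv a.g) (a.θ i) < 0}) f hcont (fun i => a.θ i.1)
    (by
      intro i j h
      simp only [hf.2.1] at h
      exact Subtype.ext (a.values_distinct _ _ h))
    (by
      intro i
      simp only [hf.2.1]
      exact strict_arc a i.1 i.2) X Y
    (by
      intro q hq hm
      obtain ⟨h1, h2⟩ := interior_max a hneg f hf q hq hm
      simp only [X, Finset.mem_filter, Set.Finite.mem_toFinset]
      exact ⟨⟨h1, h2.fderiv_eq_zero⟩, h2⟩)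
    (by
      intro q hq hm
      obtain ⟨h1, h2⟩ := interior_min a hneg f hf q hq hm
      simp only [Y, Finset.mem_filter, Set.Finite.mem_toFinset]
      exact ⟨⟨h1, h2.fderiv_eq_zero⟩, h2⟩)
  rw [hfin.encard_eq_coe_toFinset_card]
  have h3 : (X ∪ Y).card ≤ hfin.toFinset.card :=
    Finset.card_le_card (Finset.union_subset (Finset.filter_subset _ _) (Finset.filter_subset _ _))
  rw [Finset.card_union_of_disjoint hdis] at h3
  unfold Ribbon.maxN
  exact_mod_cast hmain.trans h3


lemma toC_smul (r : ℝ) (x : E2) : toC (r • x) = r * toC x := by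
  apply Complex.ext <;> simp [toC]

lemma toC_contDiff : ContDiff ℝ (⊤ : ℕ∞) toC := by
  have : toC = fun x : E2 => ((x 0 : ℝ) : ℂ) + ((x 1 : ℝ) : ℂ) * Complex.I := by
    funext x; apply Complex.ext <;> simp [toC]
  rw [this]
  have h0 : ContDiff ℝ (⊤ : ℕ∞) (fun x : E2 => x 0) := by fun_prop
  have h1 : ContDiff ℝ (⊤ : ℕ∞) (fun x : E2 => x 1) := by fun_prop
  exact (Complex.ofRealCLM.contDiff.comp h0).add ((Complex.ofRealCLM.contDiff.comp h1).mul contDiff_const)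

lemma ang_val (u : ℝ → ℝ) (hu : Function.Periodic u (2 * Real.pi)) (r t : ℝ) (hr : 0 < r) :
    u (Complex.arg (toC (r • sphPt t))) = u t := by
  rw [toC_smul, toC_sphPt, Complex.arg_real_mul _ hr, Complex.arg_exp]
  simp only [Complex.mul_im, Complex.ofReal_re, Complex.I_im, mul_one, Complex.ofReal_im, Complex.I_re, mul_zero, add_zero]
  rw [← self_sub_toIocDiv_zsmul, hu.sub_zsmul_eq]

lemma arg_contDiffAt (z : ℂ) (hz : z ∈ Complex.slitPlane) : ContDiffAt ℝ (⊤ : ℕ∞) Complex.arg z := by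
  have h := (Complex.contDiffAt_log (n := ((⊤ : ℕ∞) : WithTop ℕ∞)) hz).restrict_scalars ℝ
  have e : Complex.arg = Complex.imCLM ∘ Complex.log := by
    funext z; simp [Complex.log_im]
  rw [e]
  exact Complex.imCLM.contDiff.contDiffAt.comp z h

lemma ang_smooth (u : ℝ → ℝ) (hs : ContDiff ℝ (⊤ : ℕ∞) u) (hu : Function.Periodic u (2 * Real.pi)) (x : E2) (hx : x ≠ 0) :
    ContDiffAt ℝ (⊤ : ℕ∞) (fun x => u (Complex.arg (toC x))) x := by
  by_cases h : toC x ∈ Complex.slitPlane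
  · exact hs.contDiffAt.comp x ((arg_contDiffAt _ h).comp x toC_contDiff.contDiffAt)
  have hne : toC x ≠ 0 := by
    intro h0; apply hx; rw [← norm_eq_zero, ← toC_norm, h0, norm_zero]
  have h' : -toC x ∈ Complex.slitPlane := by
    rw [Complex.mem_slitPlane_iff] at h ⊢
    push Not at h
    left
    have : (toC x).re ≠ 0 := fun h0 => hne (Complex.ext h0 h.2)
    have := lt_of_le_of_ne h.1 this
    simpa using this
  have e : (fun x => u (Complex.arg (toC x))) =ᶠ[nhds x] fun x => u (Complex.arg (-toC x) + Real.pi) := by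
    filter_upwards [toC_cont.continuousAt.eventually_ne hne] with y hy
    have h1 := Complex.norm_mul_exp_arg_mul_I (toC y)
    have : Complex.exp (Complex.arg (toC y) * Complex.I) = Complex.exp ((Complex.arg (-toC y) + Real.pi : ℝ) * Complex.I) := by
      have hn : (‖toC y‖ : ℂ) ≠ 0 := by simpa using hy
      apply mul_left_cancel₀ hn
      rw [h1]
      have h2 := Complex.norm_mul_exp_arg_mul_I (-toC y)
      rw [norm_neg] at h2
      push_cast
      rw [add_mul, Complex.exp_add, Complex.exp_pi_mul_I, ← mul_assoc, h2]; ring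
    obtain ⟨k, hk⟩ := Complex.exp_eq_exp_iff_exists_int.1 this
    have hk2 := congrArg Complex.im hk
    simp at hk2
    rw [hk2]
    exact hu.int_mul k _
  refine ContDiffAt.congr_of_eventuallyEq ?_ e
  refine hs.contDiffAt.comp x (ContDiffAt.add ?_ contDiffAt_const)
  exact (arg_contDiffAt _ h').comp x toC_contDiff.neg.contDiffAt

def tanv (t : ℝ) : E2 := (-Real.sin t) • sphPt 0 + Real.cos t • sphPt (Real.pi / 2)

lemma sphPt_hasDerivAt (t : ℝ) : HasDerivAt sphPt (tanv t) t := by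
  have e : sphPt = fun t => Real.cos t • sphPt 0 + Real.sin t • sphPt (Real.pi / 2) := by
    funext s; ext i; fin_cases i <;> simp
  have h := ((Real.hasDerivAt_cos t).smul_const (sphPt 0)).add ((Real.hasDerivAt_sin t).smul_const (sphPt (Real.pi / 2)))
  rw [e]
  exact h

lemma span_zero (L : E2 →L[ℝ] ℝ) (r t : ℝ) (hr : 0 < r) (h1 : L (sphPt t) = 0) (h2 : L (r • tanv t) = 0) : L = 0 := by
  have h3 : L (tanv t) = 0 := by
    rw [map_smul, smul_eq_mul] at h2
    exact (mul_eq_zero.1 h2).resolve_left hr.ne'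
  ext x
  have e : x = (x 0 * Real.cos t + x 1 * Real.sin t) • sphPt t + (-x 0 * Real.sin t + x 1 * Real.cos t) • tanv t := by
    have := Real.sin_sq_add_cos_sq t
    ext i; fin_cases i
    · simp [tanv]; linear_combination (-x 0) * this
    · simp [tanv]; linear_combination (-x 1) * this
  rw [e, map_add, map_smul, map_smul, h1, h3]; simp

lemma exists_w {n : ℕ} (a : Ribbon n) : ∃ (w : ℝ → ℝ) (κ : ℝ), 0 < κ ∧ ContDiff ℝ (⊤ : ℕ∞) w ∧
    Function.Periodic w (2 * Real.pi) ∧ (∀ t, |w t| ≤ 1) ∧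
    (∀ t ∈ Set.Ico (0:ℝ) (2 * Real.pi), κ * |deriv w t| ≤ |deriv a.g t| / 2) ∧
    (∀ i, deriv (deriv a.g) (a.θ i) < 0 → w (a.θ i) = 1) ∧
    (∀ i, 0 < deriv (deriv a.g) (a.θ i) → w (a.θ i) = -1) := by
  set g2 := deriv (deriv a.g) with hg2
  have sm1 : ContDiff ℝ (⊤ : ℕ∞) (deriv a.g) := (contDiff_infty_iff_deriv.1 a.smooth_g).2
  have sm2 : ContDiff ℝ (⊤ : ℕ∞) g2 := (contDiff_infty_iff_deriv.1 sm1).2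
  have per_deriv : ∀ u : ℝ → ℝ, Function.Periodic u (2 * Real.pi) → Function.Periodic (deriv u) (2 * Real.pi) := by
    intro u hu t
    rw [← deriv_comp_add_const]
    congr 1; funext s; exact hu s
  have p1 := per_deriv _ a.periodic_g
  have p2 := per_deriv _ p1
  haveI : Nonempty (Fin n) := ⟨⟨0, a.n_pos⟩⟩
  obtain ⟨i0, hi0⟩ := Finite.exists_min (fun i => |g2 (a.θ i)|)
  set η := |g2 (a.θ i0)| / 2 with hη
  have hη0 : 0 < η := by have := abs_pos.2 (a.node_nondeg i0); positivity
  have hηi : ∀ i, η < |g2 (a.θ i)| := fun i => by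
    have h1 : |g2 (a.θ i0)| ≤ |g2 (a.θ i)| := hi0 i
    linarith
  set χ : ℝ → ℝ := fun x => 1 - 2 * Real.smoothTransition ((x + η) / (2 * η)) with hχ
  have smχ : ContDiff ℝ (⊤ : ℕ∞) χ :=
    contDiff_const.sub (contDiff_const.mul (Real.smoothTransition.contDiff.comp ((contDiff_id.add contDiff_const).div_const _)))
  have χ1 : ∀ x, η ≤ x → χ x = -1 := by
    intro x hx
    have : 1 ≤ (x + η) / (2 * η) := by rw [le_div_iff₀ (by positivity)]; linarith
    simp only [hχ, Real.smoothTransition.one_of_one_le this]; norm_num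
  have χ2 : ∀ x, x ≤ -η → χ x = 1 := by
    intro x hx
    have : (x + η) / (2 * η) ≤ 0 := div_nonpos_of_nonpos_of_nonneg (by linarith) (by positivity)
    simp only [hχ, Real.smoothTransition.zero_of_nonpos this]; norm_num
  set w : ℝ → ℝ := fun t => χ (g2 t) with hw
  have smw : ContDiff ℝ (⊤ : ℕ∞) w := smχ.comp sm2
  have smw1 : ContDiff ℝ (⊤ : ℕ∞) (deriv w) := (contDiff_infty_iff_deriv.1 smw).2
  obtain ⟨C, hC⟩ := (isCompact_Icc (a := (0:ℝ)) (b := 2 * Real.pi)).exists_bound_of_continuousOn smw1.continuous.continuousOn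
  have hd : ∃ d > 0, ∀ t ∈ Set.Icc (0:ℝ) (2 * Real.pi), |g2 t| ≤ η → d ≤ |deriv a.g t| := by
    set Kc := Set.Icc (0:ℝ) (2 * Real.pi) ∩ {t | |g2 t| ≤ η} with hKc
    have hK : IsCompact Kc := isCompact_Icc.inter_right (isClosed_le sm2.continuous.abs continuous_const)
    rcases Kc.eq_empty_or_nonempty with he | hne
    · refine ⟨1, one_pos, fun t ht h => ?_⟩
      have : t ∈ Kc := ⟨ht, h⟩
      rw [he] at this; exact this.elim
    obtain ⟨t0, ht0, hmin⟩ := hK.exists_isMinOn hne (f := fun t => |deriv a.g t|) sm1.continuous.abs.continuousOn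
    refine ⟨|deriv a.g t0|, abs_pos.2 ?_, fun t ht h => hmin ⟨ht, h⟩⟩
    intro h0
    have hcase : ∃ i, |g2 t0| = |g2 (a.θ i)| := by
      rcases lt_or_eq_of_le ht0.1.2 with hlt | heq
      · obtain ⟨i, hi⟩ := a.crit_only t0 ⟨ht0.1.1, hlt⟩ h0
        exact ⟨i, by rw [hi]⟩
      · have hz : t0 = 0 + 2 * Real.pi := by rw [heq]; ring
        rw [hz, p1] at h0
        obtain ⟨i, hi⟩ := a.crit_only 0 ⟨le_rfl, Real.two_pi_pos⟩ h0
        exact ⟨i, by rw [hz, hg2, p2, ← hi]⟩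
    obtain ⟨i, hi⟩ := hcase
    have h1 := hηi i
    have h2 : |g2 t0| ≤ η := ht0.2
    linarith
  obtain ⟨d, hd0, hd⟩ := hd
  have hC0 : 0 ≤ C := (norm_nonneg _).trans (hC 0 ⟨le_rfl, Real.two_pi_pos.le⟩)
  refine ⟨w, d / (2 * (C + 1)), by positivity, smw, fun t => by
    show χ (g2 (t + 2 * Real.pi)) = χ (g2 t)
    rw [show g2 (t + 2 * Real.pi) = g2 t from p2 t], ?_, ?_, ?_, ?_⟩
  · intro t
    have h1 := Real.smoothTransition.nonneg ((g2 t + η) / (2 * η))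
    have h2 := Real.smoothTransition.le_one ((g2 t + η) / (2 * η))
    simp only [hw, hχ]
    rw [abs_le]; constructor <;> linarith
  · intro t ht
    have ht' : t ∈ Set.Icc (0:ℝ) (2 * Real.pi) := Set.Ico_subset_Icc_self ht
    by_cases hle : |g2 t| ≤ η
    · have h1 := hd t ht' hle
      have h2 := hC t ht'
      rw [Real.norm_eq_abs] at h2
      have h3 : d / (2 * (C + 1)) * |deriv w t| ≤ d / (2 * (C + 1)) * (C + 1) := by
        gcongr; linarith
      have h4 : d / (2 * (C + 1)) * (C + 1) = d / 2 := by field_simp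
      linarith
    · push Not at hle
      have hz : deriv w t = 0 := by
        rcases lt_abs.1 hle with h | h
        · have : w =ᶠ[nhds t] fun _ => -1 := by
            filter_upwards [sm2.continuous.continuousAt.eventually (lt_mem_nhds h)] with s hs using χ1 _ (le_of_lt hs)
          rw [this.deriv_eq]; simp
        · have : w =ᶠ[nhds t] fun _ => 1 := by
            filter_upwards [sm2.continuous.continuousAt.eventually (gt_mem_nhds (show g2 t < -η by linarith))] with s hs using χ2 _ (le_of_lt hs)
          rw [this.deriv_eq]; simp
      rw [hz, abs_zero, mul_zero]; positivity
  · intro i hi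
    apply χ2
    have := hηi i
    rw [abs_of_neg hi] at this; linarith
  · intro i hi
    apply χ1
    have := hηi i
    rw [abs_of_pos hi] at this; linarith


lemma decomp (x : E2) (hx : x ≠ 0) : ∃ t ∈ Set.Ico (0:ℝ) (2 * Real.pi), x = ‖x‖ • sphPt t := by
  have hn : ‖x‖ ≠ 0 := norm_ne_zero_iff.2 hx
  obtain ⟨t, ht, h⟩ := exists_angle (‖x‖⁻¹ • x) (by rw [norm_smul, norm_inv, norm_norm, inv_mul_cancel₀ hn])
  exact ⟨t, ht, by rw [← h, smul_smul, mul_inv_cancel₀ hn, one_smul]⟩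

lemma exists_A : ∃ (A : ℝ → ℝ) (C : ℝ), ContDiff ℝ (⊤ : ℕ∞) A ∧ (∀ s, s ≤ 1/2 → A s = 0) ∧
    (∀ s, 3/4 ≤ s → A s = 1) ∧ (∀ s, |A s| ≤ 1) ∧ 0 ≤ C ∧ (∀ s ∈ Set.Icc (0:ℝ) 1, |deriv A s| ≤ C) := by
  have sm : ContDiff ℝ (⊤ : ℕ∞) (fun s : ℝ => Real.smoothTransition (4 * s - 2)) :=
    Real.smoothTransition.contDiff.comp ((contDiff_const.mul contDiff_id).sub contDiff_const)
  have sm1 := (contDiff_infty_iff_deriv.1 sm).2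
  obtain ⟨C, hC⟩ := (isCompact_Icc (a := (0:ℝ)) (b := 1)).exists_bound_of_continuousOn sm1.continuous.continuousOn
  refine ⟨_, C, sm, fun s hs => Real.smoothTransition.zero_of_nonpos (by linarith),
    fun s hs => Real.smoothTransition.one_of_one_le (by linarith), fun s => ?_,
    (norm_nonneg _).trans (hC 0 ⟨le_rfl, zero_le_one⟩), hC⟩
  rw [abs_of_nonneg (Real.smoothTransition.nonneg _)]
  exact Real.smoothTransition.le_one _

lemma exists_ext {n : ℕ} (a : Ribbon n) (hneg : ∀ i, a.ν i = -1) :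
    ∃ f, IsExtension a f ∧ (critPts f).encard = ((a.maxN + 1 : ℕ) : ℕ∞) := by
  obtain ⟨w, κ, hκ, smw, pw, hw1, hwd, hwmax, hwmin⟩ := exists_w a
  obtain ⟨A, C, smA, A0, A1, hA1, hC0, hC⟩ := exists_A
  obtain ⟨B, hB⟩ := (isCompact_Icc (a := (0:ℝ)) (b := 2 * Real.pi)).exists_bound_of_continuousOn
    a.smooth_g.continuous.continuousOn
  have hB0 : 0 ≤ B := (norm_nonneg _).trans (hB 0 ⟨le_rfl, Real.two_pi_pos.le⟩)
  obtain ⟨K, hK⟩ : ∃ K, K = 2 * (C * (B + κ) + κ) + 1 := ⟨_, rfl⟩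
  have hCB : 0 ≤ C * (B + κ) := by positivity
  have hKκ : 2 * κ < K := by linarith
  have hK0 : 0 < K := by linarith
  obtain ⟨f, hf⟩ : ∃ f : E2 → ℝ, f = fun x => -K * (1 - ‖x‖^2)^2 + A (‖x‖^2) *
      (a.g (Complex.arg (toC x)) + κ * (1 - ‖x‖^2) * w (Complex.arg (toC x))) := ⟨_, rfl⟩
  have smn : ContDiff ℝ (⊤ : ℕ∞) (fun x : E2 => ‖x‖^2) := contDiff_norm_sq ℝ
  have hnear : ∀ᶠ x in nhds (0:E2), f x = -K * (1 - ‖x‖^2)^2 := by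
    have : ∀ᶠ x in nhds (0:E2), ‖x‖^2 < 1/2 :=
      smn.continuous.continuousAt.eventually (gt_mem_nhds (by norm_num))
    filter_upwards [this] with x hx
    rw [hf]; simp only; rw [A0 _ hx.le]; ring
  have smf : ContDiff ℝ (⊤ : ℕ∞) f := by
    rw [contDiff_iff_contDiffAt]
    intro x
    have h1 : ContDiff ℝ (⊤ : ℕ∞) (fun x : E2 => -K * (1 - ‖x‖^2)^2) :=
      contDiff_const.mul ((contDiff_const.sub smn).pow 2)
    by_cases hx : x = 0
    · subst hx
      exact h1.contDiffAt.congr_of_eventuallyEq hnear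
    rw [hf]
    refine h1.contDiffAt.add ((smA.comp smn).contDiffAt.mul (ContDiffAt.add ?_ (ContDiffAt.mul ?_ ?_)))
    · exact ang_smooth _ a.smooth_g a.periodic_g x hx
    · exact (contDiff_const.mul (contDiff_const.sub smn)).contDiffAt
    · exact ang_smooth _ smw pw x hx
  have hdf : ∀ x, HasFDerivAt f (fderiv ℝ f x) x := fun x => (smf.differentiable (by simp) x).hasFDerivAt
  have polar : ∀ r t, 0 < r → f (r • sphPt t) = -K * (1 - r^2)^2 + A (r^2) * (a.g t + κ * (1 - r^2) * w t) := by
    intro r t hr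
    have hn : ‖r • sphPt t‖ = r := by rw [norm_smul, norm_sphPt, mul_one, Real.norm_of_nonneg hr.le]
    rw [hf]; simp only
    rw [hn, ang_val _ a.periodic_g r t hr, ang_val _ pw r t hr]
  have hdA : ∀ s, HasDerivAt A (deriv A s) s := fun s => (smA.differentiable (by simp) s).hasDerivAt
  have hdg : ∀ s, HasDerivAt a.g (deriv a.g s) s := fun s => (a.smooth_g.differentiable (by simp) s).hasDerivAt
  have hdw : ∀ s, HasDerivAt w (deriv w s) s := fun s => (smw.differentiable (by simp) s).hasDerivAt
  have radial : ∀ r t, 0 < r → fderiv ℝ f (r • sphPt t) (sphPt t) =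
      2 * r * (2 * K * (1 - r^2) + deriv A (r^2) * (a.g t + κ * (1 - r^2) * w t) - κ * w t * A (r^2)) := by
    intro r t hr
    have h2 : HasDerivAt (fun r : ℝ => r • sphPt t) ((1:ℝ) • sphPt t) r := (hasDerivAt_id r).smul_const _
    have h1 := (hdf (r • sphPt t)).comp_hasDerivAt r h2
    rw [one_smul] at h1
    have hp : HasDerivAt (fun r : ℝ => r^2) (2 * r) r := by simpa using hasDerivAt_pow 2 r
    have hq : HasDerivAt (fun r : ℝ => 1 - r^2) (-(2 * r)) r := hp.const_sub 1
    have h3 := ((hq.pow 2).const_mul (-K)).add (((hdA (r^2)).comp r hp).mul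
      (((hq.const_mul κ).mul_const (w t)).const_add (a.g t)))
    have e : (f ∘ fun r : ℝ => r • sphPt t) =ᶠ[nhds r]
        (fun r => -K * (1 - r^2)^2 + A (r^2) * (a.g t + κ * (1 - r^2) * w t)) := by
      filter_upwards [lt_mem_nhds hr] with r' hr' using polar r' t hr'
    have h4 := h1.unique (HasDerivAt.congr_of_eventuallyEq h3 e)
    rw [h4]
    simp only [Function.comp]
    push_cast
    ring
  have tang : ∀ r t, 0 < r → fderiv ℝ f (r • sphPt t) (r • tanv t) =
      A (r^2) * (deriv a.g t + κ * (1 - r^2) * deriv w t) := by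
    intro r t hr
    have h2 : HasDerivAt (fun t : ℝ => r • sphPt t) (r • tanv t) t := (sphPt_hasDerivAt t).const_smul r
    have h1 := (hdf (r • sphPt t)).comp_hasDerivAt t h2
    have h3 := (((hdg t).add ((hdw t).const_mul (κ * (1 - r^2)))).const_mul (A (r^2))).const_add (-K * (1 - r^2)^2)
    have e : (f ∘ fun t : ℝ => r • sphPt t) =
        (fun t => -K * (1 - r^2)^2 + A (r^2) * (a.g t + κ * (1 - r^2) * w t)) := by
      funext t'; exact polar r t' hr
    rw [e] at h1
    exact h1.unique h3
  have A1' : ∀ s, 3/4 < s → deriv A s = 0 := by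
    intro s hs
    have : A =ᶠ[nhds s] fun _ => 1 := by
      filter_upwards [lt_mem_nhds hs] with s' hs' using A1 s' hs'.le
    rw [this.deriv_eq]; simp
  -- main analysis
  have crit : ∀ r, 0 < r → r ≤ 1 → ∀ t ∈ Set.Ico (0:ℝ) (2 * Real.pi), fderiv ℝ f (r • sphPt t) = 0 →
      ∃ i, t = a.θ i ∧ 2 * K * (1 - r^2) = κ * w t := by
    intro r hr hr1 t ht h0
    have hR := radial r t hr
    have hT := tang r t hr
    rw [h0] at hR hT
    simp only [zero_apply] at hR hT
    have hr2 : r^2 ≤ 1 := by nlinarith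
    have hr20 : 0 < r^2 := by positivity
    have hR' : 2 * K * (1 - r^2) + deriv A (r^2) * (a.g t + κ * (1 - r^2) * w t) - κ * w t * A (r^2) = 0 := by
      rcases mul_eq_zero.1 hR.symm with h | h
      · linarith
      · exact h
    by_cases hs : r^2 ≤ 3/4
    · exfalso
      have b1 : |a.g t| ≤ B := hB t (Set.Ico_subset_Icc_self ht)
      have b2 : |κ * (1 - r^2) * w t| ≤ κ := by
        rw [abs_mul, abs_of_nonneg (by apply mul_nonneg <;> linarith)]
        calc κ * (1 - r^2) * |w t| ≤ κ * 1 * 1 := by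
              gcongr
              · linarith
              · exact hw1 t
          _ = κ := by ring
      have b3 : |deriv A (r^2) * (a.g t + κ * (1 - r^2) * w t)| ≤ C * (B + κ) := by
        rw [abs_mul]
        refine mul_le_mul (hC _ ⟨hr20.le, hr2⟩) ((abs_add_le _ _).trans (add_le_add b1 b2)) (abs_nonneg _) hC0
      have b4 : |κ * w t * A (r^2)| ≤ κ := by
        rw [abs_mul, abs_mul, abs_of_pos hκ]
        calc κ * |w t| * |A (r^2)| ≤ κ * 1 * 1 := by
              gcongr
              · exact hw1 t
              · exact hA1 _
          _ = κ := by ring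
      have := abs_le.1 b3
      have := abs_le.1 b4
      nlinarith
    · push Not at hs
      rw [A1' _ hs, A1 _ hs.le] at hR'
      rw [A1 _ hs.le] at hT
      have hg0 : deriv a.g t = 0 := by
        have e : deriv a.g t = -((1 - r^2) * (κ * deriv w t)) := by linarith
        have h5 : |deriv a.g t| ≤ |deriv a.g t| / 2 := by
          calc |deriv a.g t| = (1 - r^2) * (κ * |deriv w t|) := by
                rw [e, abs_neg, abs_mul, abs_mul, abs_of_pos hκ, abs_of_nonneg (by linarith)]
            _ ≤ 1 * (κ * |deriv w t|) := by
                apply mul_le_mul_of_nonneg_right (by linarith) (by positivity)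
            _ ≤ _ := by rw [one_mul]; exact hwd t ht
        have := abs_nonneg (deriv a.g t)
        exact abs_eq_zero.1 (by linarith)
      obtain ⟨i, hi⟩ := a.crit_only t ht hg0
      exact ⟨i, hi, by linarith⟩
  have fs : ∀ t, f (sphPt t) = a.g t := by
    intro t
    have := polar 1 t one_pos
    rw [one_smul] at this
    rw [this, one_pow, A1 1 (by norm_num)]; ring
  have wne : ∀ i, w (a.θ i) ≠ 0 := by
    intro i
    rcases lt_or_gt_of_ne (a.node_nondeg i) with h | h
    · rw [hwmax i h]; norm_num
    · rw [hwmin i h]; norm_num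
  have rad1 : ∀ t, fderiv ℝ f (sphPt t) (sphPt t) = -2 * κ * w t := by
    intro t
    have := radial 1 t one_pos
    rw [one_smul] at this
    rw [this, one_pow, A1 1 (by norm_num), A1' 1 (by norm_num)]; ring
  refine ⟨f, ⟨smf, fs, ?_, ?_⟩, ?_⟩
  · intro x hx h0
    have hx1 : ‖x‖ = 1 := by simpa using hx
    obtain ⟨t, ht, rfl⟩ := exists_angle x hx1
    obtain ⟨i, hi, h⟩ := crit 1 one_pos le_rfl t ht (by rw [one_smul]; exact h0)
    have := wne i
    rw [← hi] at this
    have h' : κ * w t = 0 := by linarith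
    exact (mul_ne_zero hκ.ne' this) h'
  · intro i
    rw [inner_gradient_left, rad1, hneg i]
    refine ⟨fun h => ?_, fun h => ?_⟩
    · rw [hwmax i h]; push_cast; linarith
    · rw [hwmin i h]; push_cast; linarith
  -- counting
  obtain ⟨s, hs⟩ : ∃ s, s = 1 - κ / (2 * K) := ⟨_, rfl⟩
  have hq : κ / (2 * K) < 1/4 := by rw [div_lt_iff₀ (by positivity)]; linarith
  have hq0 : 0 < κ / (2 * K) := by positivity
  have hs1 : 3/4 < s := by linarith
  have hs2 : s < 1 := by linarith
  have hsK : 2 * K * (1 - s) = κ := by rw [hs]; field_simp; ring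
  obtain ⟨ρ, hρ⟩ : ∃ ρ, ρ = Real.sqrt s := ⟨_, rfl⟩
  have hρ0 : 0 < ρ := by rw [hρ]; apply Real.sqrt_pos.2; linarith
  have hρ2 : ρ^2 = s := by rw [hρ]; exact Real.sq_sqrt (by linarith)
  have hρ1 : ρ < 1 := by nlinarith
  let e : {i : Fin n // deriv (deriv a.g) (a.θ i) < 0} → E2 := fun i => ρ • sphPt (a.θ i.1)
  have hset : critPts f = insert 0 (Set.range e) := by
    ext x
    constructor
    · rintro ⟨hx1, hx2⟩
      by_cases hx : x = 0
      · exact Or.inl hx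
      right
      have hxn : ‖x‖ < 1 := by simpa using hx1
      have hx0 : 0 < ‖x‖ := norm_pos_iff.2 hx
      obtain ⟨t, ht, hxe⟩ := decomp x hx
      rw [hxe] at hx2
      obtain ⟨i, hi, h⟩ := crit ‖x‖ hx0 hxn.le t ht hx2
      have hpos : 0 < κ * w t := by
        rw [← h]
        have : ‖x‖^2 < 1 := by nlinarith
        have : 0 < 1 - ‖x‖^2 := by linarith
        positivity
      have hmx : deriv (deriv a.g) (a.θ i) < 0 := by
        rcases lt_or_gt_of_ne (a.node_nondeg i) with h | h
        · exact h
        · rw [hi, hwmin i h] at hpos; linarith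
      rw [hi, hwmax i hmx, mul_one, ← hsK] at h
      have h6 : ‖x‖^2 = s := by
        have := mul_left_cancel₀ (by positivity : (2 * K) ≠ 0) h
        linarith
      have h7 : ‖x‖ = ρ := by rw [hρ, ← h6, Real.sqrt_sq hx0.le]
      refine ⟨⟨i, hmx⟩, ?_⟩
      show ρ • sphPt (a.θ i) = x
      rw [← h7, ← hi, ← hxe]
    · rintro (rfl | ⟨⟨i, hi⟩, rfl⟩)
      · refine ⟨by simp, ?_⟩
        apply IsLocalMin.fderiv_eq_zero
        have : ∀ᶠ x in nhds (0:E2), ‖x‖^2 < 1/2 :=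
          smn.continuous.continuousAt.eventually (gt_mem_nhds (by norm_num))
        filter_upwards [hnear, this] with x hx hx2
        rw [hx, hnear.self_of_nhds, norm_zero]
        have := sq_nonneg ‖x‖
        have : (1 - ‖x‖^2)^2 ≤ 1 := by nlinarith
        nlinarith
      · show ρ • sphPt (a.θ i) ∈ _
        refine ⟨by simp [norm_smul, norm_sphPt, abs_of_pos hρ0, hρ1], ?_⟩
        apply span_zero _ ρ (a.θ i) hρ0
        · rw [radial _ _ hρ0, hρ2, A1 _ hs1.le, A1' _ hs1, hwmax i hi]
          linear_combination (2 * ρ) * hsK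
        · rw [tang _ _ hρ0, hρ2, A1 _ hs1.le, a.node_crit]
          have h := hwd _ (a.theta_mem i)
          rw [a.node_crit, abs_zero, zero_div] at h
          have h' : |deriv w (a.θ i)| ≤ 0 := by
            by_contra hc
            push Not at hc
            have := mul_pos hκ hc
            linarith
          rw [abs_eq_zero.1 (le_antisymm h' (abs_nonneg _))]; ring
  have einj : Function.Injective e := by
    rintro ⟨i, hi⟩ ⟨j, hj⟩ h
    have h' : ρ • sphPt (a.θ i) = ρ • sphPt (a.θ j) := h
    have h2 := smul_right_injective E2 hρ0.ne' h'
    have h3 : a.g (a.θ i) = a.g (a.θ j) := by rw [← fs, ← fs, h2]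
    exact Subtype.ext (a.values_distinct i j h3)
  have hnot : (0:E2) ∉ Set.range e := by
    rintro ⟨⟨i, hi⟩, h⟩
    have h' : ρ • sphPt (a.θ i) = 0 := h
    have := congrArg norm h'
    rw [norm_smul, norm_sphPt, norm_zero, mul_one, Real.norm_of_nonneg hρ0.le] at this
    linarith
  rw [hset, Set.encard_insert_of_notMem hnot, ← Set.image_univ, einj.encard_image, Set.encard_univ, ENat.card_eq_coe_fintype_card]
  rw [Ribbon.maxN]
  push_cast
  rfl

lemma maxN_add {n : ℕ} (a : Ribbon n) : a.maxN + a.neg.maxN = n := by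
  classical
  have h : ∀ i, deriv (deriv a.neg.g) (a.neg.θ i) = - deriv (deriv a.g) (a.θ i) := by
    intro i
    show deriv (deriv (fun t => - a.g t)) (a.θ i) = _
    rw [show deriv (fun t => - a.g t) = fun t => - deriv a.g t from by funext t; exact deriv.fun_neg]
    exact deriv.fun_neg
  have e : a.neg.maxN = Fintype.card {i : Fin n // ¬ deriv (deriv a.g) (a.θ i) < 0} := by
    unfold Ribbon.maxN
    apply Fintype.card_congr
    apply Equiv.subtypeEquivRight
    intro i
    rw [h i]
    have := a.node_nondeg i
    constructor
    · intro h; linarith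
    · intro h
      have := lt_of_le_of_ne (not_lt.1 h) this.symm
      linarith
  rw [e, Fintype.card_subtype_compl, Fintype.card_fin]
  have : a.maxN ≤ Fintype.card (Fin n) := Fintype.card_subtype_le _
  rw [Fintype.card_fin] at this
  unfold Ribbon.maxN at *
  omega

lemma maxN_le {n : ℕ} (a : Ribbon n) (hneg : ∀ i, a.ν i = -1) : a.neg.maxN ≤ a.maxN := by
  obtain ⟨f, hf, hc⟩ := exists_ext a hneg
  have := lower_max a.neg hneg _ (neg_ext a f hf)
  rw [critPts_neg, hc] at this
  have := Nat.cast_le.1 this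
  omega

lemma maxN_eq {n : ℕ} (a : Ribbon n) (hneg : ∀ i, a.ν i = -1) : a.maxN = n / 2 := by
  have h1 := maxN_le a hneg
  have h2 : a.maxN ≤ a.neg.maxN := by
    obtain ⟨f, hf, hc⟩ := exists_ext a.neg hneg
    have := lower_max a hneg _ (neg_neg_ext a f hf)
    rw [critPts_neg, hc] at this
    have := Nat.cast_le.1 this
    omega
  have := maxN_add a
  omega

/-- If all nodes of a ribbon `a` with `n` nodes are negative, then `γ(a) = n/2 + 1`:
every extension of `a` has at least `n/2 + 1` critical points in the open unit disk,
and some extension has exactly `n/2 + 1` critical points. -/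
theorem stmt_3 (n : ℕ) (a : Ribbon n) (hneg : ∀ i, a.ν i = -1) :
    (∀ f : E2 → ℝ, IsExtension a f → ((n / 2 + 1 : ℕ) : ℕ∞) ≤ (critPts f).encard) ∧
    (∃ f : E2 → ℝ, IsExtension a f ∧ (critPts f).encard = ((n / 2 + 1 : ℕ) : ℕ∞)) ∧
    gammaR a = ((n / 2 + 1 : ℕ) : ℕ∞) := by
  have hm := maxN_eq a hneg
  have lb : ∀ f : E2 → ℝ, IsExtension a f → ((n / 2 + 1 : ℕ) : ℕ∞) ≤ (critPts f).encard := by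
    intro f hf
    rw [← hm]; exact lower_max a hneg f hf
  have ex : ∃ f : E2 → ℝ, IsExtension a f ∧ (critPts f).encard = ((n / 2 + 1 : ℕ) : ℕ∞) := by
    rw [← hm]; exact exists_ext a hneg
  refine ⟨lb, ex, le_antisymm (sInf_le ex) (le_sInf ?_)⟩
  rintro k ⟨f, hf, rfl⟩
  exact lb f hf
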